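/- A finitely generated infinite group G has finitely many ends if and only if G admits a transitive translation-like action by ℤ. -/

import Mathlib

open scoped Pointwise

/-- A right action of a group `H` on a type `X`. -/
structure RightAction (H X : Type*) [Group H] where
  act : X → H → X
  act_one : ∀ x, act x 1 = x
  act_mul : ∀ x h k, act (act x h) k = act x (h * k)

/-- A right action is translation-like w.r.t. a distance function `d` if it is free and
every element moves points a uniformly bounded distance. -/
def RightAction.IsTranslationLike {H X : Type*} [Group H]
    (a : RightAction H X) (d : X → X → ℝ) : Prop :=
  (∀ (x : X) (h : H), a.act x h = x → h = 1) ∧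
  (∀ h : H, ∃ C : ℝ, ∀ x : X, d x (a.act x h) ≤ C)

/-- A right action is transitive if any point can be moved to any other point. -/
def RightAction.IsTransitive {H X : Type*} [Group H] (a : RightAction H X) : Prop :=
  ∀ x y : X, ∃ h : H, a.act x h = y

/-- `S` is a finite generating set of the group `G`. -/
def IsFinGenSet {G : Type*} [Group G] (S : Set G) : Prop :=
  S.Finite ∧ Subgroup.closure S = ⊤

/-- The left-invariant word-length distance associated to a generating set `S`:
`wordDist S g h` is the least `n` with `g⁻¹ * h ∈ (S ∪ S⁻¹) ^ n`. -/
noncomputable def wordDist {G : Type*} [Group G] (S : Set G) (g h : G) : ℕ :=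
  sInf {n : ℕ | g⁻¹ * h ∈ (S ∪ S⁻¹) ^ n}

/-- The word metric as a real-valued distance function. -/
noncomputable def wordMetric {G : Type*} [Group G] (S : Set G) : G → G → ℝ :=
  fun g h => (wordDist S g h : ℝ)

/-- The (right) Cayley graph of a group w.r.t. a set `S`: `g` and `gs` are adjacent
for `s ∈ S ∪ S⁻¹`. -/
def cayleyGraph {G : Type*} [Group G] (S : Set G) : SimpleGraph G :=
  SimpleGraph.fromRel (fun g h => g⁻¹ * h ∈ S ∪ S⁻¹)

/-- The graph `Γ` has at most `m` ends: for every finite set `A` of edges, the graph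
`Γ − A` has at most `m` infinite connected components. -/
def graphEndsLE {V : Type*} (Γ : SimpleGraph V) (m : ℕ) : Prop :=
  ∀ A : Finset (Sym2 V),
    {c : (Γ.deleteEdges (A : Set (Sym2 V))).ConnectedComponent | c.supp.Infinite}.encard ≤ m

/-!
A transitive free action of `ℤ` on `G` enumerates `G` by a bi-infinite sequence, and the action is
translation-like exactly when the steps of this sequence take finitely many values. So the question
is when such a line exists.

If it does, a set with finite boundary in the Cayley graph is almost invariant under right
translations, so the line eventually stays inside or outside it in each of its two directions.
Hence no three disjoint infinite sets with finite boundary exist, and `G` has at most two ends.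

Conversely, by Freudenthal and Hopf, finitely many ends means at most two: three or more could be
increased by translating the separating sets away from themselves. So `G`, or each half of a
partition of `G` into two infinite sets with finite boundary, is one-ended. The vertices of a
one-ended graph form a ray in the cube of the graph: one repeatedly passes through a finite
connected piece with one-ended connected complement, which is possible since the cube of a finite
connected graph is Hamiltonian-connected. A single ray folds to a line (even terms one way, odd
terms the other), and two complementary rays concatenate to one.
-/

namespace GroupEnds

open SimpleGraph

section Boundary

variable {V : Type*} {Γ Δ : SimpleGraph V} {K W X Y : Set V}

/-- The inner vertex boundary of `X` in `Γ`: the vertices of `X` with a neighbour outside `X`. For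
locally finite graphs it is finite exactly when only finitely many edges leave `X`. -/
def innerBoundary (Γ : SimpleGraph V) (X : Set V) : Set V :=
  {a ∈ X | ∃ b ∉ X, Γ.Adj a b}

lemma innerBoundary_subset : innerBoundary Γ X ⊆ X := fun _ h ↦ h.1

lemma innerBoundary_mono (h : Γ ≤ Δ) : innerBoundary Γ X ⊆ innerBoundary Δ X :=
  fun _ ⟨ha, b, hb, hab⟩ ↦ ⟨ha, b, hb, h hab⟩

lemma innerBoundary_inter_subset :
    innerBoundary Γ (X ∩ Y) ⊆ innerBoundary Γ X ∩ Y ∪ X ∩ innerBoundary Γ Y := by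
  rintro a ⟨⟨haX, haY⟩, b, hb, hab⟩
  by_cases hbX : b ∈ X
  · exact .inr ⟨haX, haY, b, fun hbY ↦ hb ⟨hbX, hbY⟩, hab⟩
  · exact .inl ⟨⟨haX, b, hbX, hab⟩, haY⟩

lemma innerBoundary_induce_preimage_subset :
    innerBoundary (Γ.induce W) (Subtype.val ⁻¹' X) ⊆ Subtype.val ⁻¹' innerBoundary Γ X :=
  fun _ ⟨ha, b, hb, hab⟩ ↦ ⟨ha, b, hb, hab⟩

lemma innerBoundary_image_val_subset {X : Set W} :
    innerBoundary Γ (Subtype.val '' X) ⊆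
      Subtype.val '' innerBoundary (Γ.induce W) X ∪ innerBoundary Γ W := by
  rintro _ ⟨⟨a, ha, rfl⟩, b, hb, hab⟩
  by_cases hbW : b ∈ W
  · exact .inl ⟨a, ⟨ha, ⟨b, hbW⟩, fun h ↦ hb ⟨_, h, rfl⟩, hab⟩, rfl⟩
  · exact .inr ⟨a.2, b, hbW, hab⟩

lemma finite_innerBoundary_compl (hΓ : ∀ v, (Γ.neighborSet v).Finite)
    (hX : (innerBoundary Γ X).Finite) : (innerBoundary Γ Xᶜ).Finite := by
  refine (hX.biUnion fun a _ ↦ hΓ a).subset ?_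
  rintro b ⟨hb, a, ha, hba⟩
  exact Set.mem_biUnion ⟨not_not.1 ha, b, hb, hba.symm⟩ hba.symm

lemma finite_innerBoundary_image_val {X : Set W} (hW : (innerBoundary Γ W).Finite)
    (hX : (innerBoundary (Γ.induce W) X).Finite) :
    (innerBoundary Γ (Subtype.val '' X)).Finite :=
  ((hX.image _).union hW).subset innerBoundary_image_val_subset

lemma nonempty_innerBoundary (hΓ : Γ.Preconnected) (hX : X.Nonempty) (hX' : X ≠ Set.univ) :
    (innerBoundary Γ X).Nonempty := by
  obtain ⟨⟨a, ha⟩, b, hb⟩ := hX, (Set.ne_univ_iff_exists_notMem X).1 hX'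
  obtain ⟨p⟩ := hΓ a b
  obtain ⟨d, -, hd, hd'⟩ := p.exists_boundary_dart X ha hb
  exact ⟨d.fst, hd, d.snd, hd', d.adj⟩

lemma disjoint_of_disjoint_innerBoundary (hΓ : Γ.Preconnected) (hX : X ≠ Set.univ)
    (hXY : Disjoint (innerBoundary Γ X) Y) (hYX : Disjoint (innerBoundary Γ Y) X) :
    Disjoint X Y := by
  rw [Set.disjoint_iff_inter_eq_empty, ← Set.not_nonempty_iff_eq_empty]
  intro h
  have hne : X ∩ Y ≠ Set.univ := fun h ↦ hX (Set.univ_subset_iff.1 (h ▸ Set.inter_subset_left))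
  obtain ⟨a, ha⟩ := nonempty_innerBoundary hΓ h hne
  obtain ⟨hX, hY⟩ | ⟨hX, hY⟩ := innerBoundary_inter_subset ha
  · exact hXY.ne_of_mem hX hY rfl
  · exact hYX.ne_of_mem hY hX rfl

lemma subset_or_disjoint_of_preconnected_induce (hK : (Γ.induce K).Preconnected)
    (h : Disjoint (innerBoundary Γ X) K) : K ⊆ X ∨ Disjoint K X := by
  rw [or_iff_not_imp_right, Set.not_disjoint_iff]
  rintro ⟨a, haK, haX⟩
  by_contra hKX
  have hne : Subtype.val ⁻¹' X ≠ (Set.univ : Set K) := by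
    rwa [Ne, Set.preimage_eq_univ_iff, Subtype.range_val]
  obtain ⟨b, hb⟩ := nonempty_innerBoundary hK ⟨⟨a, haK⟩, haX⟩ hne
  exact h.ne_of_mem (innerBoundary_induce_preimage_subset hb) b.2 rfl

lemma exists_reachable_innerBoundary (hΓ : Γ.Preconnected) {x y : W}
    (hxy : ¬ (Γ.induce W).Reachable x y) :
    ∃ a : W, (a : V) ∈ innerBoundary Γ W ∧ (Γ.induce W).Reachable x a := by
  let C : Set V := Subtype.val '' {z : W | (Γ.induce W).Reachable x z}
  have hyC : (y : V) ∉ C := fun ⟨_, hz, hzy⟩ ↦ hxy (Subtype.ext hzy ▸ hz)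
  obtain ⟨_, ⟨a, ha, rfl⟩, b, hb, hab⟩ := nonempty_innerBoundary hΓ (X := C)
    ⟨x, x, .refl x, rfl⟩ fun h ↦ hyC (h ▸ Set.mem_univ _)
  refine ⟨a, ⟨a.2, b, fun hbW ↦ hb ⟨⟨b, hbW⟩, ha.trans ?_, rfl⟩, hab⟩, ha⟩
  exact Adj.reachable (G := Γ.induce W) hab

lemma preconnected_induce_of_reachable_innerBoundary (hΓ : Γ.Preconnected) (h : Γ ≤ Δ)
    (hW : ∀ a b : W, (a : V) ∈ innerBoundary Γ W → (b : V) ∈ innerBoundary Γ W →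
      (Δ.induce W).Reachable a b) : (Δ.induce W).Preconnected := by
  have hmono : Γ.induce W ≤ Δ.induce W := comap_monotone _ h
  intro x y
  by_contra hxy
  have hxy' : ¬ (Γ.induce W).Reachable x y := mt (·.mono hmono) hxy
  obtain ⟨a, ha, hxa⟩ := exists_reachable_innerBoundary hΓ hxy'
  obtain ⟨b, hb, hyb⟩ := exists_reachable_innerBoundary hΓ (mt .symm hxy')
  exact hxy ((hxa.mono hmono).trans ((hW a b ha hb).trans (hyb.mono hmono).symm))

lemma preconnected_induce_of_isClique_innerBoundary (hΓ : Γ.Preconnected) (h : Γ ≤ Δ)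
    (hW : Δ.IsClique (innerBoundary Γ W)) : (Δ.induce W).Preconnected := by
  refine preconnected_induce_of_reachable_innerBoundary hΓ h fun a b ha hb ↦ ?_
  obtain rfl | hab := eq_or_ne a b
  · exact .refl a
  · exact Adj.reachable (G := Δ.induce W) (hW ha hb (Subtype.coe_ne_coe.2 hab))

lemma preconnected_induce_of_innerBoundary_subset (hΓ : Γ.Preconnected)
    (hK : (Γ.induce K).Preconnected) (hKW : K ⊆ W) (hW : innerBoundary Γ W ⊆ K) :
    (Γ.induce W).Preconnected :=
  preconnected_induce_of_reachable_innerBoundary hΓ le_rfl fun a b ha hb ↦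
    (hK ⟨a, hW ha⟩ ⟨b, hW hb⟩).map (induceHomOfLE Γ hKW).toHom

lemma connected_induce_image {V' : Type*} {Γ' : SimpleGraph V'} (f : Γ →g Γ')
    (hX : (Γ.induce X).Connected) : (Γ'.induce (f '' X)).Connected :=
  hX.map (induceHom f (Set.mapsTo_image f X)) <| by
    rintro ⟨_, a, ha, rfl⟩; exact ⟨⟨a, ha⟩, rfl⟩

lemma innerBoundary_compl_coe_subset (C : Γ.ComponentCompl K) :
    innerBoundary Γ (C : Set V)ᶜ ⊆ K := by
  rintro a ⟨ha, b, hb, hab⟩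
  by_contra haK
  exact ha (ComponentCompl.mem_of_adj b a (not_not.1 hb) haK hab.symm)

lemma connected_induce_componentCompl (C : Γ.ComponentCompl K) :
    (Γ.induce (C : Set V)).Connected := by
  have h := connected_induce_image (Embedding.induce Kᶜ).toHom
    (ConnectedComponent.connected_toSimpleGraph C)
  convert h using 2 <;> ext <;> simp [ConnectedComponent.supp]

lemma preconnected_induce_compl_componentCompl (hΓ : Γ.Preconnected)
    (hK : (Γ.induce K).Preconnected) (C : Γ.ComponentCompl K) :
    (Γ.induce (C : Set V)ᶜ).Preconnected :=
  preconnected_induce_of_innerBoundary_subset hΓ hK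
    (Set.subset_compl_iff_disjoint_right.2 C.disjoint_right) (innerBoundary_compl_coe_subset C)

end Boundary

section EndFamily

variable {V ι : Type*} {Γ Δ : SimpleGraph V} {W X : Set V} {m : ℕ}

/-- A family of pairwise disjoint infinite vertex sets with finite boundary: such a family separates
`ι`-many ends of `Γ` from each other. -/
structure IsEndFamily (Γ : SimpleGraph V) (X : ι → Set V) : Prop where
  infinite : ∀ i, (X i).Infinite
  finite_innerBoundary : ∀ i, (innerBoundary Γ (X i)).Finite
  disjoint : Pairwise (Function.onFun Disjoint X)

lemma innerBoundary_supp_subset {A : Set (Sym2 V)} (c : (Γ.deleteEdges A).ConnectedComponent) :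
    innerBoundary Γ c.supp ⊆ {v | ∃ e ∈ A, v ∈ e} := by
  rintro a ⟨ha, b, hb, hab⟩
  by_contra h
  have hab' : (Γ.deleteEdges A).Adj a b :=
    deleteEdges_adj.2 ⟨hab, fun he ↦ h ⟨_, he, Sym2.mem_mk_left a b⟩⟩
  exact hb ((c.mem_supp_congr_adj hab').1 ha)

lemma finite_setOf_mem_sym2 {A : Set (Sym2 V)} (hA : A.Finite) : {v | ∃ e ∈ A, v ∈ e}.Finite := by
  have h : {v | ∃ e ∈ A, v ∈ e} = ⋃ e ∈ A, {v | v ∈ e} := by ext; simp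
  rw [h]
  exact hA.biUnion fun e _ ↦ by
    induction e with | _ a b => exact (Set.toFinite {a, b}).subset fun v hv ↦ by simpa using hv

lemma finite_connectedComponent_deleteEdges (hΓ : Γ.Preconnected) {A : Set (Sym2 V)}
    (hA : A.Finite) : Finite (Γ.deleteEdges A).ConnectedComponent := by
  cases isEmpty_or_nonempty V
  · exact Quot.finite _
  obtain ⟨v₀⟩ := ‹Nonempty V›
  refine Set.finite_univ_iff.1 <|
    (((finite_setOf_mem_sym2 hA).insert v₀).image (connectedComponentMk _)).subset fun c _ ↦ ?_
  by_cases hc : c.supp = Set.univ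
  · exact ⟨v₀, Set.mem_insert _ _, c.mem_supp_iff v₀ |>.1 (hc ▸ Set.mem_univ v₀)⟩
  · obtain ⟨a, ha⟩ := nonempty_innerBoundary hΓ c.nonempty_supp hc
    exact ⟨a, Set.mem_insert_of_mem _ (innerBoundary_supp_subset c ha), ha.1⟩

lemma exists_infinite_supp_subset [Finite Γ.ConnectedComponent] (hX : X.Infinite)
    (h : innerBoundary Γ X = ∅) : ∃ c : Γ.ConnectedComponent, c.supp.Infinite ∧ c.supp ⊆ X := by
  have := hX.to_subtype
  obtain ⟨c, hc⟩ := Finite.exists_infinite_fiber fun x : X ↦ Γ.connectedComponentMk x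
  have hcX : (X ∩ c.supp).Infinite :=
    ((Set.infinite_coe_iff.1 hc).image Subtype.val_injective.injOn).mono <| by
      rintro _ ⟨x, hx, rfl⟩; exact ⟨x.2, hx⟩
  refine ⟨c, hcX.mono Set.inter_subset_right, ?_⟩
  refine (subset_or_disjoint_of_preconnected_induce (Γ := Γ)
    c.connected_toSimpleGraph.preconnected (h ▸ Set.empty_disjoint _)).resolve_right ?_
  exact Set.not_disjoint_iff_nonempty_inter.2 (Set.inter_comm X _ ▸ hcX.nonempty)

lemma IsEndFamily.card_le [Finite ι] {X : ι → Set V} (hX : IsEndFamily Γ X) (hΓ : Γ.Preconnected)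
    (hfin : ∀ v, (Γ.neighborSet v).Finite) (h : graphEndsLE Γ m) : Nat.card ι ≤ m := by
  let A : Set (Sym2 V) := ⋃ i, ⋃ a ∈ innerBoundary Γ (X i), (s(a, ·)) '' Γ.neighborSet a
  have hA : A.Finite := Set.finite_iUnion fun i ↦
    (hX.finite_innerBoundary i).biUnion fun a _ ↦ (hfin a).image _
  have hA' (i : ι) : innerBoundary (Γ.deleteEdges A) (X i) = ∅ := by
    rw [Set.eq_empty_iff_forall_notMem]
    rintro a ⟨ha, b, hb, hab⟩
    rw [deleteEdges_adj] at hab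
    exact hab.2 (Set.mem_iUnion.2 ⟨i, Set.mem_biUnion ⟨ha, b, hb, hab.1⟩ ⟨b, hab.1, rfl⟩⟩)
  have := finite_connectedComponent_deleteEdges hΓ hA
  choose c hc hcX using fun i ↦ exists_infinite_supp_subset (hX.infinite i) (hA' i)
  have hcinj : Function.Injective c := fun i j hij ↦ by
    by_contra hne
    obtain ⟨a, ha⟩ := (hc i).nonempty
    exact (hX.disjoint hne).ne_of_mem (hcX i ha) (hcX j (hij ▸ ha)) rfl
  have hm := h hA.toFinset
  rw [hA.coe_toFinset] at hm
  have hcard : ENat.card ι ≤ {c : (Γ.deleteEdges A).ConnectedComponent | c.supp.Infinite}.encard :=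
    ENat.card_le_card_of_injective (f := fun i ↦ ⟨c i, hc i⟩) fun i j hij ↦
      hcinj (congrArg Subtype.val hij)
  rw [ENat.card_eq_coe_natCard] at hcard
  exact_mod_cast hcard.trans hm

lemma graphEndsLE_of_forall_not_isEndFamily
    (h : ∀ X : Fin (m + 1) → Set V, ¬ IsEndFamily Γ X) : graphEndsLE Γ m := by
  intro A
  by_contra! hlt
  obtain ⟨t, ht, htm⟩ := Set.exists_subset_encard_eq (Order.add_one_le_of_lt hlt)
  have : Finite t := Set.finite_of_encard_eq_coe (k := m + 1) (by exact_mod_cast htm)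
  have hcard : Nat.card t = m + 1 := by
    rw [Nat.card_coe_set_eq, Set.ncard, htm]; rfl
  let c : Fin (m + 1) ≃ t := (Finite.equivFinOfCardEq hcard).symm
  refine h (fun i ↦ (c i).1.supp) ⟨fun i ↦ ht (c i).2, fun i ↦ ?_, fun i j hij ↦ ?_⟩
  · exact (finite_setOf_mem_sym2 A.finite_toSet).subset (innerBoundary_supp_subset _)
  · exact pairwise_disjoint_supp_connectedComponent _
      (Subtype.coe_ne_coe.2 (c.injective.ne hij))

/-- `Γ` has at most one end: no vertex set with finite boundary cuts it into two infinite parts. -/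
def HasAtMostOneEnd (Γ : SimpleGraph V) : Prop :=
  ∀ X : Set V, (innerBoundary Γ X).Finite → X.Finite ∨ Xᶜ.Finite

lemma HasAtMostOneEnd.mono (h : HasAtMostOneEnd Γ) (hle : Γ ≤ Δ) : HasAtMostOneEnd Δ :=
  fun X hX ↦ h X (hX.subset (innerBoundary_mono hle))

lemma HasAtMostOneEnd.induce (h : HasAtMostOneEnd Γ) (hW : (innerBoundary Γ W).Finite) :
    HasAtMostOneEnd (Γ.induce W) := by
  intro X hX
  refine (h _ (finite_innerBoundary_image_val hW hX)).imp
    (Set.Finite.of_finite_image · Subtype.val_injective.injOn) fun hXc ↦ ?_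
  exact .of_finite_image (hXc.subset (Set.image_compl_subset Subtype.val_injective))
    Subtype.val_injective.injOn

lemma hasAtMostOneEnd_induce_of_graphEndsLE_two (h : graphEndsLE Γ 2) (hΓ : Γ.Preconnected)
    (hfin : ∀ v, (Γ.neighborSet v).Finite) (hX : (innerBoundary Γ X).Finite)
    (hXc : Xᶜ.Infinite) : HasAtMostOneEnd (Γ.induce X) := by
  intro Y hY
  by_contra! hinf
  have hYc : (innerBoundary (Γ.induce X) Yᶜ).Finite :=
    finite_innerBoundary_compl (fun v ↦ (hfin v).preimage Subtype.val_injective.injOn) hY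
  have hval {Z : Set X} (hZ : Z.Infinite) : (Subtype.val '' Z).Infinite :=
    hZ.image Subtype.val_injective.injOn
  have hdisj (Z : Set X) : Disjoint (Subtype.val '' Z) Xᶜ :=
    Set.disjoint_compl_right_iff_subset.2 (Subtype.coe_image_subset X Z)
  have hYYc : Disjoint (Subtype.val '' Y) (Subtype.val '' Yᶜ) :=
    (Set.disjoint_image_iff Subtype.val_injective).2 disjoint_compl_right
  have hfam : IsEndFamily Γ ![Subtype.val '' Y, Subtype.val '' Yᶜ, Xᶜ] := by
    refine ⟨?_, ?_, ?_⟩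
    · simp [-Set.image_val_compl, Fin.forall_fin_succ, hXc, hval hinf.1, hval hinf.2]
    · simp [-Set.image_val_compl, Fin.forall_fin_succ, finite_innerBoundary_image_val hX hY,
        finite_innerBoundary_image_val hX hYc, finite_innerBoundary_compl hfin hX]
    · simp [-Set.image_val_compl, Pairwise, Fin.forall_fin_succ, Function.onFun, hYYc,
        hYYc.symm, hdisj, (hdisj _).symm]
  simpa using hfam.card_le hΓ hfin h

end EndFamily

section Cube

variable {V : Type*} {Γ Δ : SimpleGraph V} {s : Set V}

lemma exists_walk_of_induce {a b : s} (p : (Γ.induce s).Walk a b) :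
    ∃ q : Γ.Walk a b, q.length = p.length ∧ q.support = p.support.map (↑) :=
  ⟨p.map (Embedding.induce s).toHom, Walk.length_map _ p, Walk.support_map _ p⟩

/-- The cube of a graph: distinct vertices are adjacent if their distance is at most three. -/
def cube (Γ : SimpleGraph V) : SimpleGraph V where
  Adj a b := a ≠ b ∧ ∃ p : Γ.Walk a b, p.length ≤ 3
  symm := ⟨fun _ _ ⟨hab, p, hp⟩ ↦ ⟨hab.symm, p.reverse, by rwa [Walk.length_reverse]⟩⟩
  loopless := ⟨fun _ h ↦ h.1 rfl⟩

lemma cube_induce_le : cube (Γ.induce s) ≤ (cube Γ).induce s := by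
  rintro a b ⟨hab, p, hp⟩
  obtain ⟨q, hq, -⟩ := exists_walk_of_induce p
  exact ⟨Subtype.coe_ne_coe.2 hab, q, hq.trans_le hp⟩

lemma exists_isPath_cube_of_isPath_cube_induce {a b : s} {p : (cube (Γ.induce s)).Walk a b}
    (hp : p.IsPath) : ∃ q : (cube Γ).Walk a b, q.IsPath ∧ q.support = p.support.map (↑) := by
  obtain ⟨q, -, hq⟩ := exists_walk_of_induce (p.mapLe cube_induce_le)
  rw [Walk.support_mapLe_eq_support] at hq
  exact ⟨q, q.isPath_def.2 (hq ▸ hp.support_nodup.map Subtype.val_injective), hq⟩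

lemma cube_adj_of_near {a b c d : V} (hac : a ≠ c) (hab : a = b ∨ Γ.Adj a b)
    (hbd : Γ.Adj b d) (hcd : c = d ∨ Γ.Adj c d) : (cube Γ).Adj a c := by
  have near {x y : V} (h : x = y ∨ Γ.Adj x y) : ∃ p : Γ.Walk x y, p.length ≤ 1 := by
    obtain rfl | h := h
    · exact ⟨.nil, zero_le_one⟩
    · exact ⟨h.toWalk, le_rfl⟩
  obtain ⟨⟨p, hp⟩, q, hq⟩ := near hab, near hcd
  refine ⟨hac, (p.append hbd.toWalk).append q.reverse, ?_⟩
  simp only [Walk.length_append, Walk.length_reverse, Adj.length_toWalk]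
  omega

/-- A graph is Hamiltonian-connected if any two distinct vertices are the ends of a Hamiltonian
path. -/
def IsHamiltonianConnected [DecidableEq V] (Γ : SimpleGraph V) : Prop :=
  ∀ a b, a ≠ b → ∃ p : Γ.Walk a b, p.IsHamiltonian

lemma IsHamiltonianConnected.exists_walk_to_near [DecidableEq V] (h : IsHamiltonianConnected Δ)
    (hΓ : Γ.Preconnected) (a b : V) :
    ∃ c, (c = b ∨ Γ.Adj c b) ∧ ∃ p : Δ.Walk a c, p.IsHamiltonian := by
  obtain rfl | hab := eq_or_ne a b
  · cases subsingleton_or_nontrivial V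
    · exact ⟨a, .inl rfl, .nil, .of_subsingleton⟩
    · obtain ⟨c, hac⟩ := hΓ.exists_adj_of_nontrivial a
      exact ⟨c, .inr hac.symm, h a c hac.ne⟩
  · exact ⟨b, .inl rfl, h a b hab⟩

lemma exists_isHamiltonian_of_isHamiltonian_induce_compl [DecidableEq V] {a b : s} {c d : ↥sᶜ}
    {p : (Γ.induce s).Walk a b} {q : (Γ.induce sᶜ).Walk c d} (hp : p.IsHamiltonian)
    (hq : q.IsHamiltonian) (hbd : Γ.Adj b d) : ∃ r : Γ.Walk a c, r.IsHamiltonian := by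
  obtain ⟨p', -, hp'⟩ := exists_walk_of_induce p
  obtain ⟨q', -, hq'⟩ := exists_walk_of_induce q
  have hps (x) : x ∈ p'.support ↔ x ∈ s := by simp [hp', hp.mem_support]
  have hqs (x) : x ∈ q'.support ↔ x ∉ s := by simp [hq', hq.mem_support]
  have hr : (p'.append (.cons hbd q'.reverse)).support = p'.support ++ q'.support.reverse := by
    rw [Walk.support_append, Walk.support_cons, List.tail_cons, Walk.support_reverse]
  have hpath : (p'.append (.cons hbd q'.reverse)).IsPath := by
    rw [Walk.isPath_def, hr, List.nodup_append_comm]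
    refine List.Nodup.append (List.nodup_reverse.2 ?_) ?_ fun x hx hx' ↦
      (hqs x).1 (List.mem_reverse.1 hx) ((hps x).1 hx')
    · exact hq' ▸ hq.isPath.support_nodup.map Subtype.val_injective
    · exact hp' ▸ hp.isPath.support_nodup.map Subtype.val_injective
  refine ⟨_, hpath.isHamiltonian_of_mem fun x ↦ ?_⟩
  rw [hr, List.mem_append, List.mem_reverse, hps, hqs]
  exact em _

/-- **Sekanina's theorem**. A Hamiltonian path from `b` to `a` runs through the component of `b` in
`Γ - a`, up to a vertex near `a`, and then through the remaining vertices, the last one being `a`.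
-/
theorem isHamiltonianConnected_cube {V : Type*} [Finite V] [DecidableEq V] {Γ : SimpleGraph V}
    (hΓ : Γ.Preconnected) : IsHamiltonianConnected (cube Γ) := by
  intro b a hab
  let C : Γ.ComponentCompl {a} := Γ.componentComplMk (v := b) hab
  have hbC : b ∈ C := componentComplMk_mem Γ _
  obtain ⟨⟨u, a'⟩, hu, rfl : a' = a, hua⟩ :=
    C.exists_adj_boundary_pair hΓ (Set.singleton_nonempty a)
  have haC : a' ∉ C := fun h ↦ ComponentCompl.notMem_of_mem h rfl
  have hC := (connected_induce_componentCompl C).preconnected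
  have hCc : (Γ.induce (C : Set V)ᶜ).Preconnected :=
    preconnected_induce_compl_componentCompl hΓ .of_subsingleton C
  have : Nat.card (C : Set V) < Nat.card V := Finite.card_subtype_lt haC
  have : Nat.card ↥(C : Set V)ᶜ < Nat.card V := Finite.card_subtype_lt (not_not.2 hbC)
  obtain ⟨w, hw, p, hp⟩ :=
    (isHamiltonianConnected_cube hC).exists_walk_to_near hC ⟨b, hbC⟩ ⟨u, hu⟩
  obtain ⟨z, hz, q, hq⟩ :=
    (isHamiltonianConnected_cube hCc).exists_walk_to_near hCc ⟨a', haC⟩ ⟨a', haC⟩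
  have hne : (w : V) ≠ z := fun h ↦ z.2 (h ▸ w.2)
  have hwz : (cube Γ).Adj w z :=
    cube_adj_of_near hne (hw.imp_left (congrArg _)) hua (hz.imp_left (congrArg _))
  exact exists_isHamiltonian_of_isHamiltonian_induce_compl
    (hp.map (f := .ofLE cube_induce_le) Function.bijective_id)
    (hq.map (f := .ofLE cube_induce_le) Function.bijective_id) hwz
termination_by Nat.card V

end Cube

section Lists

variable {α : Type*} {L : ℕ → List α} {r : α → α → Prop}

lemma isPrefix_of_le (h : ∀ n, L n <+: L (n + 1)) {m n : ℕ} (hmn : m ≤ n) : L m <+: L n := by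
  induction n, hmn using Nat.le_induction with
  | base => exact List.prefix_rfl
  | succ n _ ih => exact ih.trans (h n)

lemma exists_getElem_eq_of_isPrefix (h : ∀ n, L n <+: L (n + 1))
    (hlen : StrictMono (List.length ∘ L)) :
    ∃ f : ℕ → α, ∀ n i, ∀ hi : i < (L n).length, (L n)[i] = f i := by
  have hlt (i : ℕ) : i < (L (i + 1)).length := hlen.id_le (i + 1)
  refine ⟨fun i ↦ (L (i + 1))[i]'(hlt i), fun n i hi ↦ ?_⟩
  obtain hn | hn := le_total n (i + 1)
  · exact (isPrefix_of_le h hn).getElem hi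
  · exact ((isPrefix_of_le h hn).getElem (hlt i)).symm

lemma exists_bijective_of_isPrefix (h : ∀ n, L n <+: L (n + 1))
    (hlen : StrictMono (List.length ∘ L)) (hnodup : ∀ n, (L n).Nodup)
    (hchain : ∀ n, (L n).IsChain r) (hcover : ∀ a, ∃ n, a ∈ L n) :
    ∃ f : ℕ → α, f.Bijective ∧ ∀ n, r (f n) (f (n + 1)) := by
  obtain ⟨f, hf⟩ := exists_getElem_eq_of_isPrefix h hlen
  have hlt {i n : ℕ} (hi : i < n) : i < (L n).length := hi.trans_le (hlen.id_le n)
  refine ⟨f, ⟨fun i j hij ↦ ?_, fun a ↦ ?_⟩, fun n ↦ ?_⟩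
  · obtain ⟨n, hin, hjn⟩ : ∃ n, i < n ∧ j < n := ⟨max i j + 1, by omega, by omega⟩
    rw [← hf n i (hlt hin), ← hf n j (hlt hjn)] at hij
    exact (hnodup n).getElem_inj_iff.1 hij
  · obtain ⟨n, hn⟩ := hcover a
    obtain ⟨i, hi, rfl⟩ := List.getElem_of_mem hn
    exact ⟨i, (hf n i hi).symm⟩
  · rw [← hf (n + 2) n (hlt (by omega)), ← hf (n + 2) (n + 1) (hlt (by omega))]
    exact (hchain (n + 2)).getElem n _

end Lists

section Ray

variable {V : Type*} {Γ : SimpleGraph V}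

lemma exists_infinite_componentCompl [Infinite V] (hΓ : Γ.Preconnected)
    (hfin : ∀ v, (Γ.neighborSet v).Finite) (K : Finset V) :
    ∃ C : Γ.ComponentCompl (K : Set V), (C : Set V).Infinite := by
  have : Γ.LocallyFinite := fun v ↦ (hfin v).fintype
  have : Fact Γ.Preconnected := ⟨hΓ⟩
  have : Finite (Γ.ComponentCompl (K : Set V)) := componentCompl_finite K
  have : Infinite ↥(K : Set V)ᶜ := K.finite_toSet.infinite_compl.to_subtype
  obtain ⟨C, hC⟩ := Finite.exists_infinite_fiber
    fun v : ↥(K : Set V)ᶜ ↦ (Γ.componentComplMk v.2 : Γ.ComponentCompl (K : Set V))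
  refine ⟨C, ((Set.infinite_coe_iff.1 hC).image Subtype.val_injective.injOn).mono ?_⟩
  rintro _ ⟨v, hv, rfl⟩
  exact ⟨v.2, hv⟩

lemma exists_isPath_cube_connected_induce_compl [Infinite V] (hΓ : Γ.Preconnected)
    (hfin : ∀ v, (Γ.neighborSet v).Finite) (hend : HasAtMostOneEnd Γ) (v t : V) :
    ∃ w, ∃ p : (cube Γ).Walk v w, p.IsPath ∧ t ∈ p.support ∧
      (Γ.induce {x | x ∉ p.support}).Connected ∧ ∃ u ∉ p.support, (cube Γ).Adj w u := by
  -- Outside a finite connected `K ∋ v, t` there is one infinite component `C`. Its complement is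
  -- finite and connected, and the path is a Hamiltonian path of the cube of `Cᶜ` ending near `C`.
  classical
  obtain ⟨K, hvtK, hK⟩ := extend_finset_to_connected hΓ (t := {v, t}) (Finset.insert_nonempty v _)
  obtain ⟨C, hC⟩ := exists_infinite_componentCompl hΓ hfin K
  have hvt : v ∈ (C : Set V)ᶜ ∧ t ∈ (C : Set V)ᶜ := by
    constructor <;> exact fun h ↦ ComponentCompl.notMem_of_mem h (hvtK (by simp))
  have hCc : (Γ.induce (C : Set V)ᶜ).Preconnected :=
    preconnected_induce_compl_componentCompl hΓ hK.preconnected C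
  have : Finite ↥(C : Set V)ᶜ :=
    (hend _ (K.finite_toSet.subset (innerBoundary_compl_coe_subset C))).resolve_right
      (by rwa [compl_compl])
  obtain ⟨⟨u, q⟩, hu, hq, huq⟩ := C.exists_adj_boundary_pair hΓ ⟨v, hvtK (by simp)⟩
  have hqC : q ∉ C := fun h ↦ ComponentCompl.notMem_of_mem h hq
  obtain ⟨w, hw, p, hp⟩ :=
    (isHamiltonianConnected_cube hCc).exists_walk_to_near hCc ⟨v, hvt.1⟩ ⟨q, hqC⟩
  obtain ⟨p', hpath, hp'⟩ := exists_isPath_cube_of_isPath_cube_induce hp.isPath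
  have hsupp (x) : x ∈ p'.support ↔ x ∉ C := by simp [hp', hp.mem_support]
  have hconn : (Γ.induce {x | x ∉ p'.support}).Connected := by
    have hset : {x | x ∉ p'.support} = C := by ext x; simp [hsupp]
    rw [hset]
    exact connected_induce_componentCompl C
  have hwu : (w : V) ≠ u := fun h ↦ w.2 (by rwa [h])
  refine ⟨w, p', hpath, (hsupp t).2 hvt.2, hconn, u, ?_, ?_⟩
  · exact mt (hsupp u).1 (not_not.2 hu)
  · exact cube_adj_of_near hwu (hw.imp_left (congrArg _)) huq.symm (.inl rfl)

/-- An initial segment, as a list, of a ray through all vertices of `cube Γ`: its complement is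
still connected in `Γ`, and it can be continued into this complement. -/
structure IsRaySegment (Γ : SimpleGraph V) (l : List V) : Prop where
  nodup : l.Nodup
  isChain : l.IsChain (cube Γ).Adj
  connected : (Γ.induce {x | x ∉ l}).Connected
  exists_adj : ∃ u ∉ l, ∀ w ∈ l.getLast?, (cube Γ).Adj w u

lemma IsRaySegment.append {l : List V} (hl : IsRaySegment Γ l) {u w : {x | x ∉ l}}
    (hlu : ∀ a ∈ l.getLast?, (cube Γ).Adj a u) {p : (cube (Γ.induce {x | x ∉ l})).Walk u w}
    (hp : p.IsPath) (hconn : ((Γ.induce {x | x ∉ l}).induce {x | x ∉ p.support}).Connected)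
    (hw : ∃ z ∉ p.support, (cube (Γ.induce {x | x ∉ l})).Adj w z) :
    IsRaySegment Γ (l ++ p.support.map (↑)) := by
  obtain ⟨q, hq, hqp⟩ := exists_isPath_cube_of_isPath_cube_induce hp
  obtain ⟨z, hz, hwz⟩ := hw
  have hcompl : {x | x ∉ l ++ q.support} =
      Subtype.val '' {x : {x | x ∉ l} | x ∉ p.support} := by
    ext x
    rw [Set.mem_ofPred_eq, List.mem_append, hqp, not_or]
    constructor
    · exact fun ⟨hxl, hxp⟩ ↦ ⟨⟨x, hxl⟩, fun h ↦ hxp (List.mem_map_of_mem h), rfl⟩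
    · rintro ⟨y, hy, rfl⟩
      exact ⟨y.2, mt (List.mem_map_of_injective Subtype.val_injective).1 hy⟩
  rw [← hqp]
  refine ⟨?_, ?_, ?_, z, ?_, ?_⟩
  · refine hl.nodup.append hq.support_nodup fun x hx hx' ↦ ?_
    obtain ⟨y, -, rfl⟩ := List.mem_map.1 (hqp ▸ hx')
    exact y.2 hx
  · refine List.isChain_append.2 ⟨hl.isChain, q.isChain_adj_support, fun a ha b hb ↦ ?_⟩
    rw [List.head?_eq_some_head q.support_ne_nil, q.head_support, Option.mem_some_iff] at hb
    exact hb ▸ hlu a ha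
  · exact hcompl ▸ connected_induce_image (Embedding.induce {x | x ∉ l}).toHom hconn
  · exact hcompl.symm.subset ⟨z, hz, rfl⟩
  · rw [List.getLast?_append_of_ne_nil _ q.support_ne_nil,
      List.getLast?_eq_some_getLast q.support_ne_nil, q.getLast_support]
    rintro _ ⟨⟩
    exact cube_induce_le hwz

lemma IsRaySegment.exists_extend [Infinite V] (hfin : ∀ v, (Γ.neighborSet v).Finite)
    (hend : HasAtMostOneEnd Γ) {l : List V} (hl : IsRaySegment Γ l) (t : V) :
    ∃ l', IsRaySegment Γ l' ∧ l <+: l' ∧ l.length < l'.length ∧ t ∈ l' := by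
  obtain ⟨u, hu, hlu⟩ := hl.exists_adj
  let W : Set V := {x | x ∉ l}
  have hWc : (Wᶜ).Finite := l.finite_toSet.subset fun x hx ↦ not_not.1 hx
  have : Infinite W := (Set.infinite_of_finite_compl hWc).to_subtype
  have hW : HasAtMostOneEnd (Γ.induce W) := hend.induce <| by
    rw [← compl_compl W]
    exact finite_innerBoundary_compl hfin (hWc.subset innerBoundary_subset)
  have hWfin (v : W) : ((Γ.induce W).neighborSet v).Finite :=
    (hfin v).preimage Subtype.val_injective.injOn
  obtain ⟨t', ht'⟩ : ∃ t' : W, t ∈ l ∨ t = t' := by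
    by_cases ht : t ∈ l
    · exact ⟨⟨u, hu⟩, .inl ht⟩
    · exact ⟨⟨t, ht⟩, .inr rfl⟩
  obtain ⟨w, p, hp, htp, hconn, hw⟩ :=
    exists_isPath_cube_connected_induce_compl hl.connected.preconnected hWfin hW ⟨u, hu⟩ t'
  refine ⟨_, hl.append hlu hp hconn hw, l.prefix_append _, by simp, ?_⟩
  exact List.mem_append.2 (ht'.imp_right fun h ↦ List.mem_map.2 ⟨t', htp, h.symm⟩)

lemma exists_bijective_cube_adj [Infinite V] [Countable V] (hΓ : Γ.Preconnected)
    (hfin : ∀ v, (Γ.neighborSet v).Finite) (hend : HasAtMostOneEnd Γ) :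
    ∃ f : ℕ → V, f.Bijective ∧ ∀ n, (cube Γ).Adj (f n) (f (n + 1)) := by
  have hnil : IsRaySegment Γ [] := by
    obtain ⟨v⟩ : Nonempty V := inferInstance
    refine ⟨.nil, .nil, ?_, v, List.not_mem_nil, by simp⟩
    have huniv : {x : V | x ∉ []} = Set.univ := by ext; simp
    rw [huniv]
    exact (induceUnivIso Γ).connected_iff.2 ((connected_iff _).2 ⟨hΓ, ⟨v⟩⟩)
  obtain ⟨t, ht⟩ := exists_surjective_nat V
  choose next hnext hle hlen hmem using
    fun l : {l // IsRaySegment Γ l} ↦ l.2.exists_extend hfin hend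
  let L : ℕ → {l // IsRaySegment Γ l} := Nat.rec ⟨[], hnil⟩ fun n l ↦ ⟨next l (t n), hnext l (t n)⟩
  refine exists_bijective_of_isPrefix (L := fun n ↦ (L n).1) (fun n ↦ hle (L n) (t n))
    (strictMono_nat_of_lt_succ fun n ↦ hlen (L n) (t n)) (fun n ↦ (L n).2.nodup)
    (fun n ↦ (L n).2.isChain) fun v ↦ ?_
  obtain ⟨n, rfl⟩ := ht v
  exact ⟨n + 1, hmem (L n) (t n)⟩

end Ray

section Cayley

variable {G : Type*} [Group G] {S T X : Set G} {g h : G}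

lemma cayleyGraph_adj : (cayleyGraph S).Adj g h ↔ g ≠ h ∧ g⁻¹ * h ∈ S ∪ S⁻¹ := by
  have hsymm : h⁻¹ * g ∈ S ∪ S⁻¹ ↔ g⁻¹ * h ∈ S ∪ S⁻¹ := by
    rw [← Set.inv_mem_inv, Set.union_inv, inv_inv, Set.union_comm, mul_inv_rev, inv_inv]
  rw [cayleyGraph, fromRel_adj, hsymm, or_self]

lemma cayleyGraph_mono (h : S ⊆ T) : cayleyGraph S ≤ cayleyGraph T := fun _ _ hgh ↦
  cayleyGraph_adj.2 <| (cayleyGraph_adj.1 hgh).imp_right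
    fun hs ↦ Set.union_subset_union h (Set.inv_subset_inv.2 h) hs

lemma cayleyGraph_adj_mul_left (a : G) :
    (cayleyGraph S).Adj (a * g) (a * h) ↔ (cayleyGraph S).Adj g h := by
  simp [cayleyGraph_adj, mul_assoc]

lemma finite_neighborSet_cayleyGraph (hS : S.Finite) (g : G) :
    ((cayleyGraph S).neighborSet g).Finite :=
  ((hS.union hS.inv).image (g * ·)).subset fun h hgh ↦
    ⟨g⁻¹ * h, (cayleyGraph_adj.1 hgh).2, mul_inv_cancel_left g h⟩

lemma preconnected_cayleyGraph (hS : Subgroup.closure S = ⊤) : (cayleyGraph S).Preconnected := by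
  suffices H : ∀ s ∈ Subgroup.closure S, ∀ g, (cayleyGraph S).Reachable g (g * s) from
    fun g h ↦ by simpa using H (g⁻¹ * h) (hS ▸ Subgroup.mem_top _) g
  intro s hs
  induction hs using Subgroup.closure_induction with
  | mem s hs =>
    intro g
    obtain hgs | hgs := eq_or_ne g (g * s)
    · exact hgs ▸ .refl g
    · exact (cayleyGraph_adj.2 ⟨hgs, by simp [hs]⟩).reachable
  | one => simp
  | mul s t _ _ hs ht => exact fun g ↦ mul_assoc g s t ▸ (hs g).trans (ht (g * s))
  | inv s _ hs => exact fun g ↦ by simpa using (hs (g * s⁻¹)).symm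

lemma inv_mul_mem_pow_length (p : (cayleyGraph S).Walk g h) :
    g⁻¹ * h ∈ (S ∪ S⁻¹) ^ p.length := by
  induction p with
  | nil => simp
  | @cons g k h hgk p ih =>
    rw [Walk.length_cons, pow_succ']
    exact Set.mem_mul.2 ⟨g⁻¹ * k, (cayleyGraph_adj.1 hgk).2, k⁻¹ * h, ih, by group⟩

lemma exists_mem_pow (hS : Subgroup.closure S = ⊤) (g : G) : ∃ n, g ∈ (S ∪ S⁻¹) ^ n := by
  obtain ⟨p⟩ := preconnected_cayleyGraph hS 1 g
  exact ⟨p.length, by simpa using inv_mul_mem_pow_length p⟩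

lemma finite_union_inv_pow (hS : S.Finite) (n : ℕ) : ((S ∪ S⁻¹) ^ n).Finite := by
  induction n with
  | zero => simp
  | succ n ih => exact pow_succ (S ∪ S⁻¹) n ▸ ih.mul (hS.union hS.inv)

lemma countable_of_isFinGenSet (hS : IsFinGenSet S) : Countable G := by
  refine Set.countable_univ_iff.1 <| (Set.countable_iUnion fun n ↦
    (finite_union_inv_pow hS.1 n).countable).mono fun g _ ↦ ?_
  exact Set.mem_iUnion.2 (exists_mem_pow hS.2 g)

lemma finite_setOf_cube_adj (hS : S.Finite) :
    {s | ∃ g, (cube (cayleyGraph S)).Adj g (g * s)}.Finite := by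
  refine ((Set.finite_Iic 3).biUnion fun n _ ↦ finite_union_inv_pow hS n).subset ?_
  rintro s ⟨g, -, p, hp⟩
  exact Set.mem_biUnion hp (by simpa using inv_mul_mem_pow_length p)

lemma innerBoundary_smul_subset :
    innerBoundary (cayleyGraph S) (g • X) ⊆ g • innerBoundary (cayleyGraph S) X := by
  rintro _ ⟨⟨x, hx, rfl⟩, b, hb, hxb⟩
  rw [Set.mem_smul_set_iff_inv_smul_mem] at hb
  refine ⟨x, ⟨hx, g⁻¹ * b, hb, (cayleyGraph_adj_mul_left g).1 ?_⟩, rfl⟩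
  rwa [mul_inv_cancel_left]

lemma connected_induce_smul (h : ((cayleyGraph S).induce X).Connected) :
    ((cayleyGraph S).induce (g • X)).Connected :=
  connected_induce_image (Γ := cayleyGraph S) ⟨(g * ·), (cayleyGraph_adj_mul_left g).2⟩ h

lemma finite_setOf_not_mem_iff_mul_mem (hS : Subgroup.closure S = ⊤)
    (hX : (innerBoundary (cayleyGraph S) X).Finite) (t : G) :
    {x | ¬ (x ∈ X ↔ x * t ∈ X)}.Finite := by
  have hinj (s : G) : Function.Injective (· * s) := mul_left_injective s
  have ht : t ∈ Subgroup.closure S := hS ▸ Subgroup.mem_top t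
  induction ht using Subgroup.closure_induction with
  | mem s hs =>
    refine (hX.union (hX.preimage (hinj s).injOn)).subset fun x hx ↦ ?_
    have hxs : (cayleyGraph S).Adj x (x * s) :=
      cayleyGraph_adj.2 ⟨fun h ↦ hx (by rw [← h]), by simp [hs]⟩
    by_cases hxX : x ∈ X
    · exact .inl ⟨hxX, x * s, fun h ↦ hx (iff_of_true hxX h), hxs⟩
    · exact .inr ⟨not_not.1 fun h ↦ hx (iff_of_false hxX h), x, hxX, hxs.symm⟩
  | one => simp
  | mul s t _ _ hs ht =>
    refine (hs.union (ht.preimage (hinj s).injOn)).subset fun x hx ↦ ?_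
    by_cases hxs : x ∈ X ↔ x * s ∈ X
    · exact .inr fun h ↦ hx (hxs.trans (by rwa [mul_assoc] at h))
    · exact .inl hxs
  | inv s _ hs =>
    exact (hs.preimage (hinj s⁻¹).injOn).subset fun x hx h ↦ hx (by simpa using h.symm)

end Cayley

section FreudenthalHopf

variable {G ι κ : Type*} [Group G] {S : Set G} {m : ℕ}

lemma IsEndFamily.sumElim {V : Type*} {Γ : SimpleGraph V} {X : ι → Set V} {Y : κ → Set V}
    (hX : IsEndFamily Γ X) (hY : IsEndFamily Γ Y) (hXY : ∀ i j, Disjoint (X i) (Y j)) :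
    IsEndFamily Γ (Sum.elim X Y) where
  infinite := Sum.forall.2 ⟨hX.infinite, hY.infinite⟩
  finite_innerBoundary := Sum.forall.2 ⟨hX.finite_innerBoundary, hY.finite_innerBoundary⟩
  disjoint := by
    rintro (i | i) (j | j) hij
    · exact hX.disjoint fun h ↦ hij (congrArg _ h)
    · exact hXY i j
    · exact (hXY j i).symm
    · exact hY.disjoint fun h ↦ hij (congrArg _ h)

lemma IsEndFamily.comp {V : Type*} {Γ : SimpleGraph V} {X : ι → Set V} (hX : IsEndFamily Γ X)
    {f : κ → ι} (hf : f.Injective) : IsEndFamily Γ (X ∘ f) where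
  infinite i := hX.infinite (f i)
  finite_innerBoundary i := hX.finite_innerBoundary (f i)
  disjoint := hX.disjoint.comp_of_injective hf

lemma IsEndFamily.smul {X : ι → Set G} (hX : IsEndFamily (cayleyGraph S) X) (g : G) :
    IsEndFamily (cayleyGraph S) fun i ↦ g • X i where
  infinite i := (hX.infinite i).smul_set
  finite_innerBoundary i := (hX.finite_innerBoundary i).smul_set.subset innerBoundary_smul_subset
  disjoint _ _ hij := Set.disjoint_smul_set.2 (hX.disjoint hij)

lemma card_le_card_subtype_add_one [Finite ι] {p : ι → Prop} (h : ∀ i j, ¬ p i → ¬ p j → i = j) :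
    Nat.card ι ≤ Nat.card {i // p i} + 1 := by
  classical
  have : Subsingleton {i // ¬ p i} := ⟨fun i j ↦ Subtype.ext (h i j i.2 j.2)⟩
  rw [← Nat.card_congr (Equiv.sumCompl p), Nat.card_sum]
  exact Nat.add_le_add_left (Finite.card_le_one_iff_subsingleton.2 this) _

lemma exists_disjoint_smul [Infinite G] {K : Set G} (hK : K.Finite) :
    ∃ g : G, Disjoint (g • K) K := by
  obtain ⟨g, hg⟩ := (hK.mul hK.inv).exists_notMem
  refine ⟨g, Set.disjoint_left.2 ?_⟩
  rintro _ ⟨k, hk, rfl⟩ hgk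
  exact hg (Set.mem_mul.2 ⟨_, hgk, k⁻¹, Set.inv_mem_inv.2 hk, by simp⟩)

lemma IsEndFamily.eq_of_not_disjoint {V : Type*} {Γ : SimpleGraph V} {X : ι → Set V} {K : Set V}
    (hX : IsEndFamily Γ X) (hK : (Γ.induce K).Connected)
    (hXK : ∀ i, Disjoint (innerBoundary Γ (X i)) K) {i j : ι} (hi : ¬ Disjoint (X i) K)
    (hj : ¬ Disjoint (X j) K) : i = j := by
  have hsub {i : ι} (hi : ¬ Disjoint (X i) K) : K ⊆ X i :=
    (subset_or_disjoint_of_preconnected_induce hK.preconnected (hXK i)).resolve_right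
      fun h ↦ hi h.symm
  obtain ⟨k, hk⟩ := hK.nonempty
  by_contra hij
  exact (hX.disjoint hij).notMem_of_mem_left (hsub hi hk) (hsub hj hk)

lemma disjoint_smul_of_disjoint (hΓ : (cayleyGraph S).Preconnected) {K X Y : Set G} {g : G}
    (hK : K.Nonempty) (hX : innerBoundary (cayleyGraph S) X ⊆ K)
    (hY : innerBoundary (cayleyGraph S) Y ⊆ K) (hXK : Disjoint X (g • K))
    (hYK : Disjoint Y (g⁻¹ • K)) : Disjoint X (g • Y) := by
  have hKY : Disjoint K (g • Y) := by simpa using (Set.disjoint_smul_set (a := g)).2 hYK.symm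
  refine disjoint_of_disjoint_innerBoundary hΓ ?_ (hKY.mono_left hX) <|
    hXK.symm.mono_left (innerBoundary_smul_subset.trans (Set.smul_set_mono hY))
  rintro rfl
  exact hK.smul_set.ne_empty (Set.univ_disjoint.1 hXK)

lemma IsEndFamily.two_mul_card_le [Infinite G] [Finite ι] {X : ι → Set G}
    (hX : IsEndFamily (cayleyGraph S) X) (hS : IsFinGenSet S) (h : graphEndsLE (cayleyGraph S) m) :
    2 * Nat.card ι ≤ m + 2 := by
  -- Let `K` be finite, connected and contain all boundaries, and let `g` move `K` off itself.
  -- At most one `X i` meets `g • K`, at most one meets `g⁻¹ • K`, and the remaining `X i`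
  -- together with the remaining `g • X i` form a single end family.
  classical
  have hΓ := preconnected_cayleyGraph hS.2
  have : (cayleyGraph S).LocallyFinite := fun g ↦ (finite_neighborSet_cayleyGraph hS.1 g).fintype
  obtain ⟨K, hbK, hK⟩ := extend_finset_to_connected hΓ (Finset.insert_nonempty 1
    (Set.finite_iUnion hX.finite_innerBoundary).toFinset)
  have hXK (i : ι) : innerBoundary (cayleyGraph S) (X i) ⊆ K := fun a ha ↦
    hbK (Finset.mem_insert_of_mem ((Set.Finite.mem_toFinset _).2 (Set.mem_iUnion.2 ⟨i, ha⟩)))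
  let p (g : G) (i : ι) : Prop := Disjoint (X i) (g • (K : Set G))
  have hp {g : G} (hg : Disjoint (g • (K : Set G)) K) : Nat.card ι ≤ Nat.card {i // p g i} + 1 :=
    card_le_card_subtype_add_one fun i j ↦ hX.eq_of_not_disjoint (connected_induce_smul hK)
      fun i ↦ hg.symm.mono_left (hXK i)
  obtain ⟨g, hg⟩ := exists_disjoint_smul K.finite_toSet
  have hg' : Disjoint (g⁻¹ • (K : Set G)) K := by
    rw [← Set.disjoint_smul_set (a := g), smul_inv_smul]; exact hg.symm
  have hY := (hX.comp (Subtype.val_injective (p := p g))).sumElim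
    ((hX.smul g).comp (Subtype.val_injective (p := p g⁻¹))) fun i j ↦
      disjoint_smul_of_disjoint hΓ (Set.nonempty_coe_sort.1 hK.nonempty) (hXK i) (hXK j) i.2 j.2
  have hcard := hY.card_le hΓ (finite_neighborSet_cayleyGraph hS.1) h
  rw [Nat.card_sum] at hcard
  linarith [hp hg, hp hg']

/-- The **Freudenthal–Hopf theorem**. -/
theorem graphEndsLE_two_of_graphEndsLE [Infinite G] (hS : IsFinGenSet S)
    (h : graphEndsLE (cayleyGraph S) m) : graphEndsLE (cayleyGraph S) 2 := by
  have hmono {n : ℕ} (hn : m ≤ n) : graphEndsLE (cayleyGraph S) n :=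
    fun A ↦ (h A).trans (by exact_mod_cast hn)
  have hstep {n : ℕ} (hn : 2 ≤ n) (h : graphEndsLE (cayleyGraph S) (n + 1)) :
      graphEndsLE (cayleyGraph S) n := by
    refine graphEndsLE_of_forall_not_isEndFamily fun X hX ↦ ?_
    have hcard := hX.two_mul_card_le hS h
    rw [Nat.card_fin] at hcard
    lia
  exact Nat.decreasingInduction' (P := fun n ↦ graphEndsLE (cayleyGraph S) n)
    (fun n _ hn ↦ hstep hn) (le_max_left 2 m) (hmono (le_max_right 2 m))

end FreudenthalHopf

section Lines

open Filter

variable {G : Type*} [Group G] {S W X : Set G} {m : ℕ}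

/-- A bi-infinite enumeration of the group `G` whose consecutive terms differ by right
multiplication by one of finitely many elements. -/
def IsBoundedStepLine (f : ℤ → G) : Prop :=
  f.Bijective ∧ (Set.range fun n ↦ (f n)⁻¹ * f (n + 1)).Finite

lemma exists_injective_range_eq_of_hasAtMostOneEnd (hS : IsFinGenSet S) (hW : W.Infinite)
    (hbd : (innerBoundary (cayleyGraph S) W).Finite)
    (hend : HasAtMostOneEnd ((cayleyGraph S).induce W)) :
    ∃ f : ℕ → G, f.Injective ∧ Set.range f = W ∧
      (Set.range fun n ↦ (f n)⁻¹ * f (n + 1)).Finite := by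
  -- `W` need not be connected in the Cayley graph of `S`, but it is in that of `T`.
  set K := innerBoundary (cayleyGraph S) W
  let T : Set G := S ∪ K⁻¹ * K
  have hT : T.Finite := hS.1.union (hbd.inv.mul hbd)
  have hST : cayleyGraph S ≤ cayleyGraph T := cayleyGraph_mono Set.subset_union_left
  have hclique : (cayleyGraph T).IsClique K := fun a ha b hb hab ↦
    cayleyGraph_adj.2 ⟨hab, .inl (.inr (Set.mul_mem_mul (Set.inv_mem_inv.2 ha) hb))⟩
  have := hW.to_subtype
  have := countable_of_isFinGenSet hS
  obtain ⟨f, hf, hadj⟩ := exists_bijective_cube_adj (Γ := (cayleyGraph T).induce W)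
    (preconnected_induce_of_isClique_innerBoundary (preconnected_cayleyGraph hS.2) hST hclique)
    (fun w ↦ (finite_neighborSet_cayleyGraph hT w).preimage Subtype.val_injective.injOn)
    (hend.mono (comap_monotone _ hST))
  refine ⟨fun n ↦ f n, Subtype.val_injective.comp hf.1, ?_, ?_⟩
  · exact (hf.2.range_comp _).trans Subtype.range_val
  · refine (finite_setOf_cube_adj hT).subset ?_
    rintro _ ⟨n, rfl⟩
    exact ⟨f n, by simpa using cube_induce_le (hadj n)⟩

lemma exists_isBoundedStepLine_of_isCompl_range {f f' : ℕ → G} (hf : f.Injective)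
    (hf' : f'.Injective) (hff' : IsCompl (Set.range f) (Set.range f'))
    (hstep : (Set.range fun n ↦ (f n)⁻¹ * f (n + 1)).Finite)
    (hstep' : (Set.range fun n ↦ (f' n)⁻¹ * f' (n + 1)).Finite) :
    ∃ F : ℤ → G, IsBoundedStepLine F := by
  have hdisj (m n : ℕ) : f m ≠ f' n := fun h ↦ Set.disjoint_left.1 hff'.disjoint ⟨m, h⟩ ⟨n, rfl⟩
  have hsurj : (Sum.elim f f').Surjective := by
    rw [← Set.range_eq_univ, Set.Sum.elim_range]
    exact hff'.codisjoint.eq_top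
  refine ⟨Sum.elim f f' ∘ Equiv.intEquivNatSumNat, .comp ⟨hf.sumElim hf' hdisj, hsurj⟩
    (Equiv.bijective _), ((hstep.union hstep'.inv).insert ((f' 0)⁻¹ * f 0)).subset ?_⟩
  rintro _ ⟨n | _ | n, rfl⟩
  · exact .inr (.inl ⟨n, rfl⟩)
  · exact .inl rfl
  · exact .inr (.inr ⟨n, by rw [mul_inv_rev, inv_inv]; rfl⟩)

lemma exists_isBoundedStepLine_of_bijective {f : ℕ → G} (hf : f.Bijective)
    (hstep : (Set.range fun n ↦ (f n)⁻¹ * f (n + 1)).Finite) :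
    ∃ F : ℤ → G, IsBoundedStepLine F := by
  have hstep₂ : (Set.range fun n ↦ (f n)⁻¹ * f (n + 2)).Finite := by
    refine (hstep.mul hstep).subset ?_
    rintro _ ⟨n, rfl⟩
    exact Set.mem_mul.2 ⟨_, ⟨n, rfl⟩, _, ⟨n + 1, rfl⟩, by group⟩
  refine ⟨f ∘ Equiv.intEquivNat, hf.comp (Equiv.bijective _),
    ((hstep₂.union hstep₂.inv).insert ((f 1)⁻¹ * f 0)).subset ?_⟩
  rintro _ ⟨n | _ | n, rfl⟩
  · exact .inr (.inl ⟨2 * n, rfl⟩)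
  · exact .inl rfl
  · exact .inr (.inr ⟨2 * n + 1, by rw [mul_inv_rev, inv_inv]; rfl⟩)

theorem exists_isBoundedStepLine_of_graphEndsLE [Infinite G] (hS : IsFinGenSet S)
    (h : graphEndsLE (cayleyGraph S) m) : ∃ f : ℤ → G, IsBoundedStepLine f := by
  have hΓ := preconnected_cayleyGraph hS.2
  have hfin := finite_neighborSet_cayleyGraph hS.1
  have h₂ := graphEndsLE_two_of_graphEndsLE hS h
  by_cases hend : HasAtMostOneEnd (cayleyGraph S)
  · have hbd : (innerBoundary (cayleyGraph S) Set.univ).Finite := by simp [innerBoundary]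
    obtain ⟨f, hf, hrange, hstep⟩ := exists_injective_range_eq_of_hasAtMostOneEnd hS
      Set.infinite_univ hbd (hend.induce hbd)
    exact exists_isBoundedStepLine_of_bijective ⟨hf, Set.range_eq_univ.1 hrange⟩ hstep
  · simp only [HasAtMostOneEnd, not_forall, not_or] at hend
    obtain ⟨X, hX, hXinf, hXcinf⟩ := hend
    have hXc := finite_innerBoundary_compl hfin hX
    obtain ⟨f, hf, hrange, hstep⟩ := exists_injective_range_eq_of_hasAtMostOneEnd hS hXinf hX
      (hasAtMostOneEnd_induce_of_graphEndsLE_two h₂ hΓ hfin hX hXcinf)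
    obtain ⟨f', hf', hrange', hstep'⟩ := exists_injective_range_eq_of_hasAtMostOneEnd hS hXcinf hXc
      (hasAtMostOneEnd_induce_of_graphEndsLE_two h₂ hΓ hfin hXc (by rwa [compl_compl]))
    exact exists_isBoundedStepLine_of_isCompl_range hf hf'
      (hrange ▸ hrange' ▸ isCompl_compl) hstep hstep'

lemma eventually_atTop_or_atBot_of_infinite {p : ℤ → Prop} (hp : {n | p n}.Infinite)
    (h : ∀ᶠ n in cofinite, (p n ↔ p (n + 1))) : (∀ᶠ n in atTop, p n) ∨ ∀ᶠ n in atBot, p n := by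
  rw [Int.cofinite_eq, eventually_sup, eventually_atBot, eventually_atTop] at h
  obtain ⟨⟨b, hb⟩, a, ha⟩ := h
  have hpa (n : ℤ) (hn : a ≤ n) : p n ↔ p a := by
    induction n, hn using Int.leInduction with
    | base => rfl
    | succ n hn ih => exact (ha n hn).symm.trans ih
  have hpb (n : ℤ) (hn : n ≤ b) : p n ↔ p b := by
    induction n, hn using Int.leInductionDown with
    | base => rfl
    | pred n hn ih =>
      have hn' : p (n - 1) ↔ p n := by simpa using hb (n - 1) (by lia)
      exact hn'.trans ih
  obtain ⟨n, hn, hnab⟩ := (hp.sdiff (Set.finite_Ioo b a)).nonempty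
  obtain hna | hna := le_or_gt a n
  · exact .inl (eventually_atTop.2 ⟨a, fun k hk ↦ (hpa k hk).2 ((hpa n hna).1 hn)⟩)
  · have hnb : n ≤ b := not_lt.1 fun hbn ↦ hnab ⟨hbn, hna⟩
    exact .inr (eventually_atBot.2 ⟨b, fun k hk ↦ (hpb k hk).2 ((hpb n hnb).1 hn)⟩)

lemma IsBoundedStepLine.eventually_mem_iff {f : ℤ → G} (hf : IsBoundedStepLine f)
    (hS : Subgroup.closure S = ⊤) (hX : (innerBoundary (cayleyGraph S) X).Finite) :
    ∀ᶠ n in cofinite, (f n ∈ X ↔ f (n + 1) ∈ X) := by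
  refine ((hf.2.biUnion fun t _ ↦ finite_setOf_not_mem_iff_mul_mem hS hX t).preimage
    hf.1.1.injOn).subset fun n hn ↦ Set.mem_biUnion ⟨n, rfl⟩ ?_
  simpa using hn

theorem IsBoundedStepLine.graphEndsLE_two {f : ℤ → G} (hf : IsBoundedStepLine f)
    (hS : Subgroup.closure S = ⊤) : graphEndsLE (cayleyGraph S) 2 := by
  refine graphEndsLE_of_forall_not_isEndFamily fun X hX ↦ ?_
  have hmem (i : Fin 3) : ∃ b : Bool, ∀ᶠ n in cond b atTop atBot, f n ∈ X i := by
    have hinf : {n | f n ∈ X i}.Infinite := (hX.infinite i).preimage (by simp [hf.1.2.range_eq])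
    simpa [or_comm] using eventually_atTop_or_atBot_of_infinite hinf
      (hf.eventually_mem_iff hS (hX.finite_innerBoundary i))
  choose b hb using hmem
  obtain ⟨i, j, hij, hbij⟩ := Fintype.exists_ne_map_eq_of_card_lt b (by simp)
  have hne : (cond (b i) (atTop : Filter ℤ) atBot).NeBot := by
    cases b i
    exacts [atBot_neBot, atTop_neBot]
  obtain ⟨n, hni, hnj⟩ := ((hb i).and (hbij ▸ hb j)).exists
  exact (hX.disjoint hij).notMem_of_mem_left hni hnj

end Lines

section Actions

variable {G H X : Type*} [Group G] [Group H] {S : Set G}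

lemma wordMetric_eq_one_inv_mul (S : Set G) (g h : G) :
    wordMetric S g h = wordMetric S 1 (g⁻¹ * h) := by
  simp [wordMetric, wordDist]

lemma mem_pow_wordDist (hS : Subgroup.closure S = ⊤) (g h : G) :
    g⁻¹ * h ∈ (S ∪ S⁻¹) ^ wordDist S g h :=
  Nat.sInf_mem (exists_mem_pow hS (g⁻¹ * h))

lemma exists_wordMetric_le_iff (hS : IsFinGenSet S) {φ : G → G} :
    (∃ C, ∀ x, wordMetric S x (φ x) ≤ C) ↔ (Set.range fun x ↦ x⁻¹ * φ x).Finite := by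
  constructor
  · rintro ⟨C, hC⟩
    obtain ⟨N, hN⟩ := exists_nat_ge C
    refine ((Set.finite_Iic N).biUnion fun n _ ↦ finite_union_inv_pow hS.1 n).subset ?_
    rintro _ ⟨x, rfl⟩
    exact Set.mem_biUnion (Nat.cast_le.1 ((hC x).trans hN)) (mem_pow_wordDist hS.2 x (φ x))
  · intro h
    obtain ⟨C, hC⟩ := (h.image (wordMetric S 1)).bddAbove
    exact ⟨C, fun x ↦ wordMetric_eq_one_inv_mul S x (φ x) ▸ hC ⟨_, ⟨x, rfl⟩, rfl⟩⟩

/-- The elements of `H` that act with finite displacement: the points of `G` are moved by right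
multiplication by one of finitely many elements of `G`. -/
def finiteDisplacement (a : RightAction H G) : Subgroup H where
  carrier := {h | (Set.range fun x ↦ x⁻¹ * a.act x h).Finite}
  one_mem' := by simp [a.act_one]
  mul_mem' {h k} hh hk := by
    refine (Set.Finite.mul hh hk).subset ?_
    rintro _ ⟨x, rfl⟩
    exact Set.mem_mul.2 ⟨_, ⟨x, rfl⟩, _, ⟨a.act x h, rfl⟩, by simp [a.act_mul]⟩
  inv_mem' {h} hh := by
    refine (Set.Finite.inv hh).subset ?_
    rintro _ ⟨x, rfl⟩
    exact ⟨a.act x h⁻¹, by simp [a.act_mul, a.act_one]⟩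

lemma isTranslationLike_wordMetric_iff (hS : IsFinGenSet S) {a : RightAction H G} :
    a.IsTranslationLike (wordMetric S) ↔
      (∀ x h, a.act x h = x → h = 1) ∧ finiteDisplacement a = ⊤ := by
  rw [Subgroup.eq_top_iff']
  exact and_congr_right fun _ ↦ forall_congr' fun h ↦ exists_wordMetric_le_iff hS

lemma bijective_act (a : RightAction H X) (hfree : ∀ x h, a.act x h = x → h = 1)
    (ha : a.IsTransitive) (x : X) : (a.act x).Bijective := by
  refine ⟨fun h k hhk ↦ mul_inv_eq_one.1 (hfree x (h * k⁻¹) ?_), ha x⟩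
  rw [← a.act_mul, hhk, a.act_mul, mul_inv_cancel, a.act_one]

/-- The right multiplication action of `H`, transported along a bijection `H ≃ X`. -/
def rightActionOfEquiv (e : H ≃ X) : RightAction H X where
  act x h := e (e.symm x * h)
  act_one := by simp
  act_mul := by simp [mul_assoc]

lemma isTransitive_rightActionOfEquiv (e : H ≃ X) : (rightActionOfEquiv e).IsTransitive :=
  fun x y ↦ ⟨(e.symm x)⁻¹ * e.symm y, by simp [rightActionOfEquiv]⟩

lemma eq_one_of_rightActionOfEquiv_act_eq {e : H ≃ X} {x : X} {h : H}
    (hx : (rightActionOfEquiv e).act x h = x) : h = 1 := by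
  simpa [rightActionOfEquiv, ← Equiv.eq_symm_apply] using hx

theorem exists_isBoundedStepLine_of_isTranslationLike (hS : IsFinGenSet S)
    {a : RightAction (Multiplicative ℤ) G} (ha : a.IsTransitive)
    (haS : a.IsTranslationLike (wordMetric S)) : ∃ f : ℤ → G, IsBoundedStepLine f := by
  obtain ⟨hfree, hdisp⟩ := (isTranslationLike_wordMetric_iff hS).1 haS
  have h₁ : Multiplicative.ofAdd 1 ∈ finiteDisplacement a := hdisp ▸ Subgroup.mem_top _
  refine ⟨fun n ↦ a.act 1 (.ofAdd n),
    (bijective_act a hfree ha 1).comp Multiplicative.ofAdd.bijective, h₁.subset ?_⟩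
  rintro _ ⟨n, rfl⟩
  exact ⟨a.act 1 (.ofAdd n), by simp [a.act_mul, ofAdd_add]⟩

theorem IsBoundedStepLine.exists_isTranslationLike {f : ℤ → G} (hf : IsBoundedStepLine f) :
    ∃ a : RightAction (Multiplicative ℤ) G, a.IsTransitive ∧
      ∀ S : Set G, IsFinGenSet S → a.IsTranslationLike (wordMetric S) := by
  let e : Multiplicative ℤ ≃ G := Multiplicative.toAdd.trans (.ofBijective f hf.1)
  have h₁ : Multiplicative.ofAdd 1 ∈ finiteDisplacement (rightActionOfEquiv e) := by
    refine hf.2.subset ?_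
    rintro _ ⟨x, rfl⟩
    obtain ⟨n, rfl⟩ := hf.1.2 x
    have hn : e.symm (f n) = .ofAdd n := e.symm_apply_eq.2 rfl
    exact ⟨n, by simp [rightActionOfEquiv, hn]; rfl⟩
  refine ⟨rightActionOfEquiv e, isTransitive_rightActionOfEquiv e, fun S hS ↦
    (isTranslationLike_wordMetric_iff hS).2 ⟨fun _ _ ↦ eq_one_of_rightActionOfEquiv_act_eq, ?_⟩⟩
  refine (Subgroup.eq_top_iff' _).2 fun h ↦ ?_
  simpa [← ofAdd_zsmul] using zpow_mem h₁ h.toAdd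

end Actions

end GroupEnds

/-- A finitely generated infinite group has finitely many ends if and only if it admits a
transitive translation-like action by `ℤ`. -/
theorem finitely_many_ends_iff_transitive_translation_like_Z
    (G : Type*) [Group G] [Group.FG G] [Infinite G] :
    (∃ m : ℕ, ∀ S : Set G, IsFinGenSet S → graphEndsLE (cayleyGraph S) m) ↔
    (∃ a : RightAction (Multiplicative ℤ) G, a.IsTransitive ∧
      ∀ S : Set G, IsFinGenSet S → a.IsTranslationLike (wordMetric S)) := by
  obtain ⟨S, hS⟩ : ∃ S : Set G, IsFinGenSet S :=
    (Group.fg_iff.1 ‹Group.FG G›).imp fun _ ↦ And.symm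
  constructor
  · rintro ⟨m, hm⟩
    obtain ⟨f, hf⟩ := GroupEnds.exists_isBoundedStepLine_of_graphEndsLE hS (hm S hS)
    exact hf.exists_isTranslationLike
  · rintro ⟨a, ha, haS⟩
    obtain ⟨f, hf⟩ := GroupEnds.exists_isBoundedStepLine_of_isTranslationLike hS ha (haS S hS)
    exact ⟨2, fun T hT ↦ hf.graphEndsLE_two hT.2⟩
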